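/- arXiv:1606.01749 — 5 statements merged into one kernel-verified Lean document; each statement's English description precedes it below -/
import Mathlib

section
/- For all real numbers λ₁ > 0 and λ₂ with 0 ≤ λ₂ < 1, the Generalized Poisson probability mass function sums to one: ∑_{x=0}^∞ λ₁(λ₁ + xλ₂)^{x-1} e^{-(λ₁ + xλ₂)} / x! = 1. -/
noncomputable def gpC (a b : ℝ) (x : ℕ) : ℝ := a * (a + x * b) ^ x / (a + x * b) / (Nat.factorial x)

lemma gp_pos {a b : ℝ} (ha : 0 < a) (hb : 0 ≤ b) (x : ℕ) : 0 < a + x * b := by positivity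

lemma gpC_nonneg {a b : ℝ} (ha : 0 < a) (hb : 0 ≤ b) (x : ℕ) : 0 ≤ gpC a b x := by
  unfold gpC; positivity

lemma gpC_bound {a b s : ℝ} (ha : 0 < a) (hb : 0 ≤ b) (hs : 0 < s) (x : ℕ) :
    gpC a b x * (s * Real.exp (-(s * b))) ^ x ≤ Real.exp (s * a) := by
  have hp := gp_pos ha hb x
  have h1 := Real.pow_div_factorial_le_exp (s * (a + x * b)) (by positivity) x
  have h2 : a / (a + x * b) ≤ 1 := by
    rw [div_le_one hp]
    have : 0 ≤ (x : ℝ) * b := by positivity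
    linarith
  have e1 : gpC a b x * (s * Real.exp (-(s * b))) ^ x
      = a / (a + x * b) * ((s * (a + x * b)) ^ x / (Nat.factorial x)) *
        Real.exp (-(s * b)) ^ x := by
    unfold gpC
    rw [mul_pow, mul_pow]
    field_simp
  rw [e1]
  calc _ ≤ 1 * Real.exp (s * (a + x * b)) * Real.exp (-(s * b)) ^ x := by gcongr
    _ = Real.exp (s * a) := by
      rw [← Real.exp_nat_mul, one_mul, ← Real.exp_add]
      congr 1
      ring

lemma gpC_summable {a b s r : ℝ} (ha : 0 < a) (hb : 0 ≤ b) (hs : 0 < s) (hr : 0 ≤ r)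
    (hrs : r < s * Real.exp (-(s * b))) : Summable fun x => gpC a b x * r ^ x := by
  set R := s * Real.exp (-(s * b)) with hR
  have hR0 : 0 < R := by positivity
  have hg : Summable fun x : ℕ => Real.exp (s * a) * (r / R) ^ x :=
    (summable_geometric_of_lt_one (by positivity) ((div_lt_one hR0).2 hrs)).mul_left _
  refine Summable.of_nonneg_of_le (fun x => mul_nonneg (gpC_nonneg ha hb x) (by positivity))
    (fun x => ?_) hg
  have := gpC_bound ha hb hs x
  calc gpC a b x * r ^ x = (gpC a b x * R ^ x) * (r / R) ^ x := by
        rw [div_pow]; field_simp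
    _ ≤ _ := by gcongr

lemma gp_antidiag {a b t : ℝ} (ha : 0 < a) (hb : 0 ≤ b) (n : ℕ) (hn : n ≠ 0) :
    ∑ p ∈ Finset.HasAntidiagonal.antidiagonal n,
      gpC a b p.1 * t ^ p.1 * ((-(t * (a + p.1 * b))) ^ p.2 / (Nat.factorial p.2)) = 0 := by
  obtain ⟨m, rfl⟩ := Nat.exists_eq_succ_of_ne_zero hn
  have hz := Polynomial.fwdDiff_iter_eq_zero_of_degree_lt (R := ℝ)
    (P := (Polynomial.C a + Polynomial.X * Polynomial.C b) ^ m) (n := m + 1) (by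
      have hd : (Polynomial.C a + Polynomial.X * Polynomial.C b).natDegree ≤ 1 := by
        compute_degree
      refine lt_of_le_of_lt Polynomial.natDegree_pow_le ?_
      nlinarith)
  have hz := congrFun hz 0
  rw [fwdDiff_iter_eq_sum_shift] at hz
  simp only [Pi.zero_apply, zero_add, nsmul_eq_mul, mul_one, Polynomial.eval_pow,
    Polynomial.eval_add, Polynomial.eval_mul, Polynomial.eval_C, Polynomial.eval_X,
    zsmul_eq_mul] at hz
  rw [Finset.Nat.sum_antidiagonal_eq_sum_range_succ_mk]
  have : ∀ k ∈ Finset.range (m + 1).succ, gpC a b k * t ^ k *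
      ((-(t * (a + k * b))) ^ (m + 1 - k) / (Nat.factorial (m + 1 - k))) =
      (a * t ^ (m + 1) / (Nat.factorial (m + 1))) *
      ((((-1 : ℤ) ^ (m + 1 - k) * (m + 1).choose k : ℤ) : ℝ) * (a + k * b) ^ m) := by
    intro k hk
    have hk' : k ≤ m + 1 := by simpa [Nat.lt_succ_iff] using hk
    obtain ⟨j, hj⟩ := Nat.exists_eq_add_of_le hk'
    have hp := gp_pos ha hb k
    have hch : (((m + 1).choose k : ℕ) : ℝ) = (Nat.factorial (m + 1)) /
      ((Nat.factorial k) * (Nat.factorial (m + 1 - k))) := Nat.cast_choose ℝ hk'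
    push_cast
    rw [hch]
    have hj' : m + 1 - k = j := by omega
    rw [hj']
    have e1 : (a + k * b) ^ k * (a + k * b) ^ j = (a + k * b) ^ m * (a + k * b) := by
      rw [← pow_add, ← pow_succ, hj]
    have e2 : t ^ (m + 1) = t ^ k * t ^ j := by rw [← pow_add, hj]
    rw [e2, neg_pow, mul_pow]
    unfold gpC
    have hf : (Nat.factorial (m + 1) : ℝ) ≠ 0 := by positivity
    have hf1 : (Nat.factorial k : ℝ) ≠ 0 := by positivity
    have hf2 : (Nat.factorial j : ℝ) ≠ 0 := by positivity
    generalize (a + k * b) = y at *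
    have e3 : y ^ m = y ^ k * y ^ j / y := by rw [e1]; field_simp
    rw [e3]
    field_simp
  rw [Finset.sum_congr rfl this, ← Finset.mul_sum, hz, mul_zero]

lemma gp_small {a b t s : ℝ} (ha : 0 < a) (hb : 0 ≤ b) (ht : 0 ≤ t) (hs : 0 < s)
    (h : t * Real.exp (t * b) < s * Real.exp (-(s * b))) :
    ∑' x, gpC a b x * (t * Real.exp (-(t * b))) ^ x = Real.exp (t * a) := by
  have key : ∀ u : ℝ, HasSum (fun k : ℕ => u ^ k / (Nat.factorial k : ℝ)) (Real.exp u) := by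
    intro u
    rw [Real.exp_eq_exp_ℝ]
    exact NormedSpace.expSeries_div_hasSum_exp u
  set F : ℕ × ℕ → ℝ := fun p =>
    gpC a b p.1 * t ^ p.1 * ((-(t * (a + p.1 * b))) ^ p.2 / (Nat.factorial p.2)) with hF
  have habs : ∀ x k, |F (x, k)| =
      gpC a b x * t ^ x * ((t * (a + x * b)) ^ k / (Nat.factorial k)) := by
    intro x k
    have := gpC_nonneg ha hb x
    have hp := gp_pos ha hb x
    simp only [hF, abs_mul, abs_div, abs_pow, abs_neg, Nat.abs_cast, abs_of_nonneg this,
      abs_of_nonneg ht, abs_of_pos hp]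
  have hsF : Summable F := by
    rw [← summable_abs_iff, summable_prod_of_nonneg (fun _ => abs_nonneg _)]
    simp only [habs]
    refine ⟨fun x => (key _).summable.mul_left _, ?_⟩
    have : ∀ x : ℕ, ∑' k : ℕ, gpC a b x * t ^ x * ((t * (a + x * b)) ^ k / (Nat.factorial k))
        = Real.exp (t * a) * (gpC a b x * (t * Real.exp (t * b)) ^ x) := by
      intro x
      rw [tsum_mul_left, (key _).tsum_eq, mul_pow, ← Real.exp_nat_mul,
        show t * (a + x * b) = t * a + x * (t * b) by ring, Real.exp_add]
      ring
    simp only [this]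
    exact (gpC_summable ha hb hs (by positivity) h).mul_left _
  have h1 : ∑' p, F p = Real.exp (-(t * a)) *
      ∑' x, gpC a b x * (t * Real.exp (-(t * b))) ^ x := by
    rw [hsF.tsum_prod, ← tsum_mul_left]
    refine tsum_congr fun x => ?_
    simp only [hF]
    rw [tsum_mul_left, (key _).tsum_eq, mul_pow, ← Real.exp_nat_mul,
        show -(t * (a + x * b)) = -(t * a) + x * (-(t * b)) by ring, Real.exp_add]
    ring
  have h2 : ∑' p, F p = 1 := by
    rw [← Finset.HasAntidiagonal.sigmaAntidiagonalEquivProd.tsum_eq F]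
    have hsS : Summable fun c : (Σ n : ℕ, Finset.HasAntidiagonal.antidiagonal n) =>
        F (Finset.HasAntidiagonal.sigmaAntidiagonalEquivProd c) :=
      (Finset.HasAntidiagonal.sigmaAntidiagonalEquivProd.summable_iff (f := F)).2 hsF
    rw [hsS.tsum_sigma' (fun n => (hasSum_fintype _).summable)]
    have : ∀ n : ℕ, ∑' c : Finset.HasAntidiagonal.antidiagonal n,
        F (Finset.HasAntidiagonal.sigmaAntidiagonalEquivProd ⟨n, c⟩) =
        ∑ p ∈ Finset.HasAntidiagonal.antidiagonal n, F p := by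
      intro n
      rw [tsum_fintype]
      exact Finset.sum_coe_sort (Finset.HasAntidiagonal.antidiagonal n) F
    simp only [this]
    rw [tsum_eq_single 0 (fun n hn => gp_antidiag ha hb n hn)]
    simp [hF, gpC, ha.ne']
  rw [h1, Real.exp_neg, inv_mul_eq_one₀ (Real.exp_pos _).ne'] at h2
  exact h2.symm

lemma gp_main {a b : ℝ} (ha : 0 < a) (hb : 0 ≤ b) (hb1 : b < 1) :
    ∑' x, gpC a b x * (Real.exp (-b)) ^ x = Real.exp a := by
  obtain ⟨T, hT1, hTb⟩ : ∃ T : ℝ, 1 < T ∧ b * T < 1 := by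
    refine ⟨2 / (1 + b), ?_, ?_⟩
    · rw [lt_div_iff₀ (by linarith)]; linarith
    · rw [← mul_div_assoc, div_lt_one (by linarith)]; linarith
  have hT0 : 0 < T := by linarith
  set R := T * Real.exp (-(T * b)) with hR
  have hR0 : 0 < R := by positivity
  have hlt : ∀ t ∈ Set.Ioo 0 T, t * Real.exp (-(t * b)) < R := by
    rintro t ⟨ht0, htT⟩
    have h1 := Real.add_one_le_exp (-(b * (T - t)))
    have h2 : t < T * Real.exp (-(b * (T - t))) := by
      have : T * (-(b * (T - t)) + 1) ≤ T * Real.exp (-(b * (T - t))) := by gcongr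
      nlinarith
    have h3 : R = T * Real.exp (-(b * (T - t))) * Real.exp (-(t * b)) := by
      rw [hR, mul_assoc, ← Real.exp_add]; congr 2; ring
    rw [h3]
    gcongr
  set p := FormalMultilinearSeries.ofScalars ℝ (gpC a b) with hp
  have hrad : ENNReal.ofReal R ≤ p.radius := by
    refine p.le_radius_of_bound (r := R.toNNReal) (Real.exp (T * a)) fun n => ?_
    rw [FormalMultilinearSeries.ofScalars_norm, Real.coe_toNNReal _ hR0.le, Real.norm_of_nonneg
      (gpC_nonneg ha hb n)]
    exact gpC_bound ha hb hT0 n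
  have hball := p.hasFPowerSeriesOnBall (lt_of_lt_of_le (by simpa using hR0) hrad)
  have hsum : ∀ z, p.sum z = ∑' x, gpC a b x * z ^ x := by
    intro z
    simp [hp, FormalMultilinearSeries.sum, mul_comm]
  have hA1 : AnalyticOnNhd ℝ (fun t : ℝ => p.sum (t * Real.exp (-(t * b)))) (Set.Ioo 0 T) := by
    intro t ht
    have hz : AnalyticAt ℝ p.sum (t * Real.exp (-(t * b))) := by
      refine hball.analyticAt_of_mem ?_
      rw [Metric.mem_eball, edist_zero_right]
      refine lt_of_lt_of_le ?_ hrad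
      have := ht.1
      rw [← ofReal_norm, Real.norm_of_nonneg (by positivity)]
      exact (ENNReal.ofReal_lt_ofReal_iff hR0).2 (hlt t ht)
    exact AnalyticAt.fun_comp (f := fun t : ℝ => t * Real.exp (-(t * b))) hz (by fun_prop)
  have hA2 : AnalyticOnNhd ℝ (fun t : ℝ => Real.exp (t * a)) (Set.Ioo 0 T) := by
    intro t ht
    fun_prop
  have hev : ∀ᶠ t in nhds (0 : ℝ), t * Real.exp (t * b) < R := by
    have hc : Continuous fun t : ℝ => t * Real.exp (t * b) := by fun_prop
    exact hc.continuousAt.eventually_lt continuousAt_const (by simpa using hR0)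
  obtain ⟨ε, hε, hεb⟩ := Metric.eventually_nhds_iff.1 hev
  set t0 := min ε T / 2 with ht0
  have hm : 0 < min ε T := lt_min hε hT0
  have hmem : t0 ∈ Set.Ioo 0 T := ⟨by positivity, by have := min_le_right ε T; linarith⟩
  have hmε : t0 ∈ Set.Ioo 0 ε := ⟨by positivity, by have := min_le_left ε T; linarith⟩
  have heq := hA1.eqOn_of_preconnected_of_eventuallyEq hA2 isPreconnected_Ioo hmem (by
    filter_upwards [isOpen_Ioo.mem_nhds hmε] with t ht
    rw [hsum]
    refine gp_small ha hb ht.1.le hT0 (hεb ?_)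
    rw [Real.dist_eq, sub_zero, abs_of_pos ht.1]
    exact ht.2)
  have := heq (show (1 : ℝ) ∈ Set.Ioo 0 T from ⟨one_pos, hT1⟩)
  simpa [hsum] using this


/-- The Generalized Poisson probability mass function sums to one:
for `λ₁ > 0` and `0 ≤ λ₂ < 1`,
`∑_{x=0}^∞ λ₁ (λ₁ + x λ₂)^(x-1) e^{-(λ₁ + x λ₂)} / x! = 1`
(with the exponent `x - 1` taken as a real power, so that the `x = 0`
term is `λ₁ · λ₁⁻¹ · e^{-λ₁} = e^{-λ₁}`). -/
theorem genPoisson_sums_to_one (lam1 lam2 : ℝ) (h1 : 0 < lam1)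
    (h2 : 0 ≤ lam2) (h2' : lam2 < 1) :
    ∑' x : ℕ, lam1 * (lam1 + x * lam2) ^ ((x : ℝ) - 1) *
      Real.exp (-(lam1 + x * lam2)) / (Nat.factorial x) = 1 := by

  have h : ∀ x : ℕ, lam1 * (lam1 + x * lam2) ^ ((x : ℝ) - 1) *
      Real.exp (-(lam1 + x * lam2)) / (Nat.factorial x) =
      Real.exp (-lam1) * (gpC lam1 lam2 x * (Real.exp (-lam2)) ^ x) := by
    intro x
    have hp := gp_pos h1 h2 x
    rw [Real.rpow_sub_one hp.ne', Real.rpow_natCast, ← Real.exp_nat_mul, gpC,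
      show -(lam1 + x * lam2) = -lam1 + x * -lam2 by ring, Real.exp_add]
    ring
  simp only [h]
  rw [tsum_mul_left, gp_main h1 h2 h2', ← Real.exp_add]
  simp
end

section
/- For all real numbers λ₁ > 0 and λ₂ with 0 ≤ λ₂ < 1, the mean of the Generalized Poisson distribution satisfies ∑_{x=0}^∞ x · λ₁(λ₁ + xλ₂)^{x-1} e^{-(λ₁ + xλ₂)} / x! = λ₁ / (1 − λ₂). -/
namespace GPAux
open Finset

lemma hs_congr {E : Type*} [NormedAddCommGroup E] {f g : ℕ → E} {a b : E} (h : HasSum f a)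
    (hfg : ∀ n, g n = f n) (hab : b = a) : HasSum g b := by
  rw [hab, funext hfg]; exact h

/-- Term of the series. -/
noncomputable def T (c : ℝ) (n : ℕ) (z : ℂ) : ℂ :=
  z ^ n * ((c + n : ℝ) : ℂ) ^ n * Complex.exp (-(z * ((c + n : ℝ) : ℂ))) / (n.factorial : ℂ)

/-- Domain. -/
def U (r : ℝ) : Set ℂ := {z | z.re < 1 ∧ ‖z‖ * Real.exp (1 - z.re) < r}

lemma isOpen_U (r : ℝ) : IsOpen (U r) := by
  apply IsOpen.inter
  · exact isOpen_lt Complex.continuous_re continuous_const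
  · have : Continuous fun z : ℂ => ‖z‖ * Real.exp (1 - z.re) :=
      continuous_norm.mul (Real.continuous_exp.comp (continuous_const.sub Complex.continuous_re))
    exact isOpen_lt this continuous_const

lemma zero_mem_U {r : ℝ} (hr : 0 < r) : (0 : ℂ) ∈ U r := by
  simp [U, hr]

lemma preconn_U {r : ℝ} (hr : 0 < r) : IsPreconnected (U r) := by
  suffices hst : StarConvex ℝ (0 : ℂ) (U r) from
    (hst.isPathConnected (zero_mem_U hr)).isConnected.isPreconnected
  rw [starConvex_iff_forall_pos (zero_mem_U hr)]
  intro y hy a t ha ht hat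
  obtain ⟨h1, h2⟩ := hy
  have ht1 : t < 1 := by linarith
  have e : a • (0 : ℂ) + t • y = (t : ℂ) * y := by simp
  rw [e]
  constructor
  · simp only [Complex.re_ofReal_mul]
    nlinarith
  · simp only [Complex.re_ofReal_mul, norm_mul, Complex.norm_real, Real.norm_eq_abs, abs_of_pos ht]
    refine lt_of_le_of_lt ?_ h2
    have k1 : t ≤ Real.exp (t - 1) := by linarith [Real.add_one_le_exp (t - 1)]
    have k2 : t * Real.exp (1 - t * y.re) ≤ Real.exp (1 - y.re) := by
      calc t * Real.exp (1 - t * y.re) ≤ Real.exp (t - 1) * Real.exp (1 - t * y.re) := by gcongr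
        _ = Real.exp (t - 1 + (1 - t * y.re)) := by rw [Real.exp_add]
        _ ≤ _ := by apply Real.exp_le_exp.mpr; nlinarith
    calc t * ‖y‖ * Real.exp (1 - t * y.re) = ‖y‖ * (t * Real.exp (1 - t * y.re)) := by ring
      _ ≤ _ := by gcongr

lemma norm_T_le {c : ℝ} (hc : 0 < c) (n : ℕ) (z : ℂ) :
    ‖T c n z‖ ≤ Real.exp (c * (1 - z.re)) * (‖z‖ * Real.exp (1 - z.re)) ^ n := by
  have hp : 0 ≤ c + n := by positivity
  have e : ‖T c n z‖ = ‖z‖ ^ n * ((c + n) ^ n / n.factorial) * Real.exp (-(z.re * (c + n))) := by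
    simp only [T, norm_mul, norm_div, norm_pow, Complex.norm_exp, Complex.norm_real,
      Complex.norm_natCast, Real.norm_eq_abs, abs_of_nonneg hp, Complex.neg_re, Complex.re_mul_ofReal]
    ring
  rw [e]
  calc _ ≤ ‖z‖ ^ n * Real.exp (c + n) * Real.exp (-(z.re * (c + n))) := by
        gcongr
        exact Real.pow_div_factorial_le_exp _ hp n
    _ = _ := by
        rw [mul_pow, ← Real.exp_nat_mul, mul_assoc, ← Real.exp_add, mul_left_comm, ← Real.exp_add]
        congr 2
        ring

lemma norm_lt_of_mem {r : ℝ} (hr : r < 1) {z : ℂ} (hz : z ∈ U r) : ‖z‖ < 1 := by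
  obtain ⟨h1, h2⟩ := hz
  have : 1 ≤ Real.exp (1 - z.re) := Real.one_le_exp (by linarith)
  nlinarith [norm_nonneg z]

lemma norm_T_le_U {c r : ℝ} (hc : 0 < c) (hr : r < 1) (n : ℕ) (z : ℂ) (hz : z ∈ U r) :
    ‖T c n z‖ ≤ Real.exp (c * 2) * r ^ n := by
  refine (norm_T_le hc n z).trans ?_
  have h := norm_lt_of_mem hr hz
  have h3 : -z.re ≤ ‖z‖ := (neg_le_abs _).trans (Complex.abs_re_le_norm z)
  gcongr
  · linarith
  · exact hz.2.le

lemma antidiag (c : ℝ) (z : ℂ) (m : ℕ) :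
    ∑ p ∈ antidiagonal m, (((c + p.1 : ℝ) : ℂ) * z) ^ p.1 / (p.1.factorial : ℂ) *
      ((-(z * ((c + p.1 : ℝ) : ℂ))) ^ p.2 / (p.2.factorial : ℂ)) = z ^ m := by
  have h := congr_fun (fwdDiff_iter_eq_factorial (R := ℂ) (n := m)) (c : ℂ)
  rw [fwdDiff_iter_eq_sum_shift] at h
  have hm : (m.factorial : ℂ) ≠ 0 := by exact_mod_cast m.factorial_ne_zero
  rw [Nat.sum_antidiagonal_eq_sum_range_succ (fun i j : ℕ =>
    (((c + i : ℝ) : ℂ) * z) ^ i / (i.factorial : ℂ) *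
      ((-(z * ((c + i : ℝ) : ℂ))) ^ j / (j.factorial : ℂ)))]
  apply mul_right_cancel₀ hm
  have h' : z ^ m * (m.factorial : ℂ) = z ^ m * _ := congrArg (z ^ m * ·) h.symm
  rw [h', Finset.sum_mul, Finset.mul_sum]
  refine Finset.sum_congr rfl fun k hk => ?_
  have hk : k ≤ m := by simpa [Nat.lt_succ_iff] using hk
  obtain ⟨j, rfl⟩ := Nat.exists_eq_add_of_le hk
  have hck : ((k + j).choose k : ℂ) * k.factorial * j.factorial = (k + j).factorial := by
    have := Nat.add_choose_mul_factorial_mul_factorial k j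
    rw [← Nat.choose_symm_add] at this
    exact_mod_cast this
  rw [← hck]
  have hk0 : (k.factorial : ℂ) ≠ 0 := by exact_mod_cast k.factorial_ne_zero
  have hj0 : (j.factorial : ℂ) ≠ 0 := by exact_mod_cast j.factorial_ne_zero
  simp only [Nat.add_sub_cancel_left, nsmul_eq_mul, mul_one, zsmul_eq_mul]
  push_cast
  field_simp
  rw [neg_pow (_ * z), mul_pow, mul_pow]
  ring

lemma local_sum {c : ℝ} (hc : 0 < c) {z : ℂ} (hz : ‖z‖ < Real.exp (-2)) :
    ∑' n, T c n z = (1 - z)⁻¹ := by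
  have hz1 : ‖z‖ < 1 := hz.trans (by rw [Real.exp_lt_one_iff]; norm_num)
  let f : ℕ × ℕ → ℂ := fun p => (((c + p.1 : ℝ) : ℂ) * z) ^ p.1 / (p.1.factorial : ℂ) *
      ((-(z * ((c + p.1 : ℝ) : ℂ))) ^ p.2 / (p.2.factorial : ℂ))
  have hin : ∀ n, HasSum (fun k => f (n, k)) (T c n z) := by
    intro n
    have := (NormedSpace.expSeries_div_hasSum_exp (-(z * ((c + n : ℝ) : ℂ)))).mul_left
      ((((c + n : ℝ) : ℂ) * z) ^ n / (n.factorial : ℂ))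
    refine hs_congr this (fun k => rfl) ?_
    rw [← Complex.exp_eq_exp_ℂ, T]
    ring
  have hnorm : ∀ n, HasSum (fun k => ‖f (n, k)‖)
      (((c + n) * ‖z‖) ^ n / (n.factorial : ℝ) * Real.exp (‖z‖ * (c + n))) := by
    intro n
    have hp : 0 ≤ c + n := by positivity
    have := (NormedSpace.expSeries_div_hasSum_exp (‖z‖ * (c + n))).mul_left
      (((c + n) * ‖z‖) ^ n / (n.factorial : ℝ))
    rw [← Real.exp_eq_exp_ℝ] at this
    refine hs_congr this (fun k => ?_) rfl
    simp only [f, norm_mul, norm_div, norm_pow, norm_neg, Complex.norm_real,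
      Complex.norm_natCast, Real.norm_eq_abs, abs_of_nonneg hp]
  have hs : Summable f := by
    apply Summable.of_norm
    rw [summable_prod_of_nonneg (fun _ => norm_nonneg _)]
    refine ⟨fun n => (hnorm n).summable, ?_⟩
    simp only [fun n => (hnorm n).tsum_eq]
    have hg : Summable fun n : ℕ => Real.exp (2 * c) * (‖z‖ * Real.exp 2) ^ n := by
      apply Summable.mul_left
      apply summable_geometric_of_lt_one (by positivity)
      calc ‖z‖ * Real.exp 2 < Real.exp (-2) * Real.exp 2 := by gcongr
        _ = 1 := by rw [← Real.exp_add]; simp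
    refine Summable.of_nonneg_of_le (fun n => by positivity) (fun n => ?_) hg
    have hp : 0 ≤ c + n := by positivity
    calc ((c + n) * ‖z‖) ^ n / (n.factorial : ℝ) * Real.exp (‖z‖ * (c + n))
        = ‖z‖ ^ n * ((c + n) ^ n / n.factorial) * Real.exp (‖z‖ * (c + n)) := by
          rw [mul_pow]; ring
      _ ≤ ‖z‖ ^ n * Real.exp (c + n) * Real.exp (1 * (c + n)) := by
          gcongr
          exact Real.pow_div_factorial_le_exp _ hp n
      _ = _ := by
          rw [mul_pow, ← Real.exp_nat_mul, mul_assoc, ← Real.exp_add, mul_left_comm, ← Real.exp_add]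
          congr 2
          ring
  have e1 : ∑' p, f p = ∑' n, T c n z := by
    rw [hs.tsum_prod' (fun n => (hin n).summable)]
    exact tsum_congr fun n => (hin n).tsum_eq
  have e2 : ∑' p, f p = ∑' m, z ^ m := by
    rw [← Finset.HasAntidiagonal.sigmaAntidiagonalEquivProd.tsum_eq]
    have hs' := Finset.HasAntidiagonal.sigmaAntidiagonalEquivProd.summable_iff.mpr hs
    refine (Summable.tsum_sigma' (fun m => Summable.of_finite) hs').trans ?_
    refine tsum_congr fun m => ?_
    rw [tsum_fintype, ← antidiag c z m]
    exact Finset.sum_coe_sort (antidiagonal m) f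
  rw [← e1, e2, tsum_geometric_of_norm_lt_one hz1]

lemma main {c r : ℝ} (hc : 0 < c) (hr0 : 0 < r) (hr : r < 1) {z : ℂ} (hz : z ∈ U r) :
    HasSum (fun n => T c n z) (1 - z)⁻¹ := by
  have hu : Summable fun n : ℕ => Real.exp (c * 2) * r ^ n :=
    (summable_geometric_of_lt_one hr0.le hr).mul_left _
  have hd : DifferentiableOn ℂ (fun w => ∑' n, T c n w) (U r) := by
    refine Complex.differentiableOn_tsum_of_summable_norm hu (fun n => ?_) (isOpen_U r)
      (norm_T_le_U hc hr)
    unfold T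
    fun_prop
  have hd2 : DifferentiableOn ℂ (fun w : ℂ => (1 - w)⁻¹) (U r) := by
    intro w hw
    have : 1 - w ≠ 0 := by
      intro h
      have := hw.1
      rw [← sub_eq_zero.mp h] at this
      simp at this
    exact (DifferentiableAt.inv (by fun_prop) this).differentiableWithinAt
  have hev : (fun w => ∑' n, T c n w) =ᶠ[nhds 0] (fun w : ℂ => (1 - w)⁻¹) := by
    filter_upwards [Metric.ball_mem_nhds (0 : ℂ) (Real.exp_pos (-2))] with w hw
    exact local_sum hc (by simpa using hw)
  have := (hd.analyticOnNhd (isOpen_U r)).eqOn_of_preconnected_of_eventuallyEq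
    (hd2.analyticOnNhd (isOpen_U r)) (preconn_U hr0) (zero_mem_U hr0) hev hz
  refine hs_congr (Summable.of_norm_bounded hu (fun n => norm_T_le_U hc hr n z hz)).hasSum (fun _ => rfl) this.symm

lemma real_main {a b : ℝ} (ha : 0 < a) (hb : 0 ≤ b) (hb1 : b < 1) :
    HasSum (fun n : ℕ => (a + n * b) ^ n * Real.exp (-(a + n * b)) / (n.factorial : ℝ))
      (1 - b)⁻¹ := by
  rcases hb.eq_or_lt with rfl | hb
  · have := (NormedSpace.expSeries_div_hasSum_exp a).mul_right (Real.exp (-a))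
    rw [← Real.exp_eq_exp_ℝ, ← Real.exp_add] at this
    refine hs_congr this (fun n => ?_) ?_
    · simp only [mul_zero, add_zero]; ring
    · simp
  · have hlt : b * Real.exp (1 - b) < 1 := by
      have := Real.add_one_lt_exp (x := b - 1) (by linarith)
      calc b * Real.exp (1 - b) < Real.exp (b - 1) * Real.exp (1 - b) := by
            gcongr; linarith
        _ = 1 := by rw [← Real.exp_add]; simp
    obtain ⟨r, h1, h2⟩ := exists_between hlt
    have hr0 : 0 < r := lt_trans (by positivity) h1
    have hm : (b : ℂ) ∈ U r := by
      refine ⟨by simpa using hb1, ?_⟩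
      simpa [abs_of_pos hb] using h1
    have := main (c := a / b) (by positivity) hr0 h2 hm
    rw [← Complex.hasSum_ofReal]
    refine hs_congr this (fun n => ?_) ?_
    · show ((_ : ℝ) : ℂ) = _
      have hbC : (b : ℂ) ≠ 0 := by exact_mod_cast hb.ne'
      have e : (b : ℂ) * ((a / b + n : ℝ) : ℂ) = a + n * b := by
        push_cast; field_simp
      rw [T, ← mul_pow, e]
      push_cast
      rfl
    · push_cast; rfl

end GPAux

/-- The mean of the Generalized Poisson distribution:
for `λ₁ > 0` and `0 ≤ λ₂ < 1`,
`∑_{x=0}^∞ x · λ₁ (λ₁ + x λ₂)^(x-1) e^{-(λ₁ + x λ₂)} / x! = λ₁ / (1 - λ₂)`. -/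
theorem genPoisson_mean (lam1 lam2 : ℝ) (h1 : 0 < lam1)
    (h2 : 0 ≤ lam2) (h2' : lam2 < 1) :
    ∑' x : ℕ, (x : ℝ) * (lam1 * (lam1 + x * lam2) ^ ((x : ℝ) - 1) *
      Real.exp (-(lam1 + x * lam2)) / (Nat.factorial x)) = lam1 / (1 - lam2) := by
  have h := (GPAux.real_main (a := lam1 + lam2) (by linarith) h2 h2').mul_left lam1
  apply HasSum.tsum_eq
  rw [← hasSum_nat_add_iff' 1]
  refine GPAux.hs_congr h (fun n => ?_) ?_
  · have e : lam1 + ((n + 1 : ℕ) : ℝ) * lam2 = lam1 + lam2 + n * lam2 := by push_cast; ring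
    have e2 : (((n + 1 : ℕ) : ℝ) - 1) = (n : ℝ) := by push_cast; ring
    rw [e, e2, Real.rpow_natCast, Nat.factorial_succ]
    have : ((n : ℝ) + 1) ≠ 0 := by positivity
    push_cast
    field_simp
  · simp [div_eq_mul_inv]
end

section
/- For all real numbers λ₁ > 0 and λ₂ with 0 ≤ λ₂ < 1, the variance of the Generalized Poisson distribution satisfies ∑_{x=0}^∞ x² · λ₁(λ₁ + xλ₂)^{x-1} e^{-(λ₁ + xλ₂)} / x! − (λ₁/(1 − λ₂))² = λ₁ / (1 − λ₂)³. -/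
open Finset in
lemma gp_diff (α : ℝ) (hα : 0 < α) (n : ℕ) (hn : n ≠ 0) :
    ∑ p ∈ antidiagonal n, α / (α + p.1) * ((α + p.1) ^ n * (-1) ^ p.2 /
      ((p.1.factorial : ℝ) * p.2.factorial)) = 0 := by
  obtain ⟨m, rfl⟩ := Nat.exists_eq_succ_of_ne_zero hn
  have h := congrFun (fwdDiff_iter_pow_eq_zero_of_lt (R := ℝ) (Nat.lt_succ_self m)) α
  rw [fwdDiff_iter_eq_sum_shift] at h
  rw [Finset.Nat.sum_antidiagonal_eq_sum_range_succ_mk]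
  have h' := congrArg (fun t => α / ((m+1).factorial : ℝ) * t) h
  simp only [Pi.zero_apply, mul_zero, Finset.mul_sum] at h'
  rw [← h']
  refine Finset.sum_congr rfl fun k hk => ?_
  have hk' : k ≤ m + 1 := by have := Finset.mem_range.1 hk; simp at this; omega
  have hc : (((m+1).choose k : ℕ) : ℝ) = ((m+1).factorial : ℝ) / (k.factorial * (m+1-k).factorial) :=
    Nat.cast_choose ℝ hk'
  have h0 : α + (k:ℝ) ≠ 0 := by positivity
  have h1 : ((m+1).factorial : ℝ) ≠ 0 := by positivity
  have h2 : ((k).factorial : ℝ) ≠ 0 := by positivity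
  have h3 : ((m+1-k).factorial : ℝ) ≠ 0 := by positivity
  simp only [Nat.succ_eq_add_one, zsmul_eq_mul, nsmul_eq_mul, mul_one]
  push_cast
  rw [hc, pow_succ]
  field_simp

noncomputable def gpf (α : ℝ) (x : ℕ) : ℝ := α / (α + x) * ((α + x) ^ x / x.factorial)

lemma gpf_nonneg (α : ℝ) (hα : 0 < α) (x : ℕ) : 0 ≤ gpf α x := by
  unfold gpf; positivity

lemma gpf_le (α : ℝ) (hα : 0 < α) (x : ℕ) :
    gpf α x ≤ Real.exp α * Real.exp 1 ^ x := by
  unfold gpf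
  have h1 : (α + x) ^ x / x.factorial ≤ Real.exp (α + x) :=
    Real.pow_div_factorial_le_exp _ (by positivity) _
  have h2 : α / (α + x) ≤ 1 := by
    rw [div_le_one (by positivity)]; simp
  have h3 : Real.exp (α + x) = Real.exp α * Real.exp 1 ^ x := by
    rw [Real.exp_add, ← Real.exp_nat_mul, mul_one]
  rw [← h3]
  calc _ ≤ 1 * Real.exp (α + x) := by gcongr
    _ = _ := one_mul _

lemma gp_summable (α : ℝ) (hα : 0 < α) (k : ℕ) (r : ℝ) (hr : 0 ≤ r) (hr' : Real.exp 1 * r < 1) :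
    Summable fun x : ℕ => (x:ℝ) ^ k * gpf α x * r ^ x := by
  have h := (summable_pow_mul_geometric_of_norm_lt_one k (r := Real.exp 1 * r)
    (by rw [Real.norm_of_nonneg (by positivity)]; exact hr')).mul_left (Real.exp α)
  refine Summable.of_nonneg_of_le (fun x => ?_) (fun x => ?_) h
  · have := gpf_nonneg α hα x; positivity
  · calc _ ≤ (x:ℝ) ^ k * (Real.exp α * Real.exp 1 ^ x) * r ^ x := by
          gcongr; exact gpf_le α hα x
      _ = _ := by rw [mul_pow]; ring

lemma gp_small_s2 (α : ℝ) (hα : 0 < α) (b : ℝ) (hb : 0 < b) (hb' : b < 1 / 10) :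
    ∑' x : ℕ, gpf α x * (b * Real.exp (-b)) ^ x = Real.exp (α * b) := by
  let g : ℕ × ℕ → ℝ := fun p => α / (α + p.1) * (((α + p.1) * b) ^ (p.1 + p.2) * (-1) ^ p.2 /
      ((p.1.factorial : ℝ) * p.2.factorial))
  have hrow (s : ℝ) (x : ℕ) : HasSum (fun m : ℕ => gpf α x * b ^ x * (((α + x) * b * s) ^ m / m.factorial))
      (gpf α x * b ^ x * Real.exp ((α + x) * b * s)) := by
    have := NormedSpace.expSeries_div_hasSum_exp ((α + x) * b * s)
    rw [← Real.exp_eq_exp_ℝ] at this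
    exact this.mul_left _
  have hg (x m : ℕ) : g (x, m) = gpf α x * b ^ x * (((α + x) * b * (-1)) ^ m / m.factorial) := by
    simp only [g, gpf, mul_pow, pow_add]
    field_simp
  have hgn (x m : ℕ) : ‖g (x, m)‖ = gpf α x * b ^ x * (((α + x) * b * 1) ^ m / m.factorial) := by
    have := gpf_nonneg α hα x
    rw [hg, mul_pow _ (-1 : ℝ), norm_mul, norm_div, norm_mul _ ((-1 : ℝ) ^ m),
      norm_pow (-1 : ℝ), norm_neg, norm_one,
      Real.norm_of_nonneg (by positivity), Real.norm_of_nonneg (by positivity),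
      Real.norm_of_nonneg (by positivity), one_pow, mul_one, mul_one]
  have hsum : Summable g := by
    apply Summable.of_norm
    rw [summable_prod_of_nonneg (fun p => norm_nonneg _)]
    refine ⟨fun x => ?_, ?_⟩
    · simp_rw [hgn]; exact (hrow 1 x).summable
    · simp_rw [hgn, (hrow 1 _).tsum_eq]
      have he : Real.exp 1 * (b * Real.exp b) < 1 := by
        have h1 := Real.exp_one_lt_d9
        have h2 : Real.exp b ≤ Real.exp 1 := Real.exp_le_exp.2 (by linarith)
        have h3 := Real.exp_pos 1
        have : Real.exp 1 * (b * Real.exp b) ≤ 3 * (b * 3) := by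
          gcongr <;> linarith
        linarith
      have := (gp_summable α hα 0 (b * Real.exp b) (by positivity) he).mul_left (Real.exp (α * b))
      refine this.congr fun x => ?_
      rw [mul_one, add_mul, Real.exp_add, mul_pow, ← Real.exp_nat_mul]
      ring
  have hA : ∑' p, g p = ∑' x : ℕ, gpf α x * b ^ x * Real.exp ((α + x) * b * (-1)) := by
    rw [hsum.tsum_prod]
    simp_rw [hg, (hrow (-1) _).tsum_eq]
  have hB : ∑' p, g p = 1 := by
    rw [← Finset.HasAntidiagonal.sigmaAntidiagonalEquivProd.tsum_eq g]
    have hs' : Summable (fun c => g (Finset.HasAntidiagonal.sigmaAntidiagonalEquivProd c)) :=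
      Finset.HasAntidiagonal.sigmaAntidiagonalEquivProd.summable_iff.2 hsum
    rw [Summable.tsum_sigma' (fun n => (hasSum_fintype _).summable) hs']
    rw [tsum_eq_single 0]
    · have h9 : α ≠ 0 := hα.ne'
      rw [tsum_fintype]
      simp only [Finset.HasAntidiagonal.sigmaAntidiagonalEquivProd_apply]
      rw [Finset.sum_coe_sort (Finset.HasAntidiagonal.antidiagonal 0) g]
      simp [g, h9]
    · intro n hn
      rw [tsum_fintype]
      have := gp_diff α hα n hn
      simp only [Finset.HasAntidiagonal.sigmaAntidiagonalEquivProd_apply]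
      rw [Finset.sum_coe_sort (Finset.HasAntidiagonal.antidiagonal n) g]
      have h2 := congrArg (fun t => b ^ n * t) this
      simp only [mul_zero, Finset.mul_sum] at h2
      rw [← h2]
      refine Finset.sum_congr rfl fun p hp => ?_
      rw [Finset.HasAntidiagonal.mem_antidiagonal] at hp
      simp only [g]
      rw [hp, mul_pow]; ring
  have hC : ∀ x : ℕ, gpf α x * (b * Real.exp (-b)) ^ x =
      Real.exp (α * b) * (gpf α x * b ^ x * Real.exp ((α + x) * b * (-1))) := by
    intro x
    have : Real.exp ((α + x) * b * (-1)) = Real.exp (-b) ^ x * Real.exp (-(α * b)) := by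
      rw [← Real.exp_nat_mul, ← Real.exp_add]; congr 1; ring
    rw [this, mul_pow]
    have h2 : Real.exp (α * b) * Real.exp (-(α * b)) = 1 := by rw [← Real.exp_add]; simp
    linear_combination (-(gpf α x * b ^ x * Real.exp (-b) ^ x)) * h2
  simp_rw [hC]
  rw [tsum_mul_left, ← hA, hB, mul_one]

lemma gp_analytic (α : ℝ) (hα : 0 < α) :
    AnalyticOnNhd ℝ (fun z : ℝ => ∑' x : ℕ, gpf α x * z ^ x) (Metric.ball 0 (Real.exp (-1))) := by
  let p := FormalMultilinearSeries.ofScalars ℝ (gpf α)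
  let r : NNReal := ⟨Real.exp (-1), (Real.exp_pos _).le⟩
  have hr : (r : ENNReal) ≤ p.radius := by
    apply p.le_radius_of_bound (Real.exp α)
    intro n
    rw [FormalMultilinearSeries.ofScalars_norm, Real.norm_of_nonneg (gpf_nonneg α hα n)]
    calc _ ≤ (Real.exp α * Real.exp 1 ^ n) * Real.exp (-1) ^ n := by
          gcongr
          · exact gpf_le α hα n
          · exact le_rfl
      _ = _ := by rw [mul_assoc, ← mul_pow, ← Real.exp_add]; simp
  have hr0 : (0 : ENNReal) < r := by
    rw [ENNReal.coe_pos]; exact Real.exp_pos _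
  have h := (p.hasFPowerSeriesOnBall (hr0.trans_le hr)).mono hr0 hr
  have h2 := h.analyticOnNhd
  have e : p.sum = (fun z : ℝ => ∑' x : ℕ, gpf α x * z ^ x) := by
    ext z
    change FormalMultilinearSeries.ofScalarsSum (gpf α) z = _
    rw [FormalMultilinearSeries.ofScalars_sum_eq]; simp
  rw [e, Metric.eball_coe] at h2
  exact h2

lemma gp_z (b : ℝ) (hb : b < 1) : Real.exp 1 * (b * Real.exp (-b)) < 1 := by
  have h := Real.add_one_lt_exp (x := b - 1) (by linarith)
  have : Real.exp 1 * (b * Real.exp (-b)) = b * Real.exp (1 - b) := by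
    rw [sub_eq_add_neg, Real.exp_add]; ring
  have h3 : Real.exp (b - 1) * Real.exp (1 - b) = 1 := by rw [← Real.exp_add]; simp
  have h4 := mul_lt_mul_of_pos_right h (Real.exp_pos (1 - b))
  rw [h3, sub_add_cancel] at h4
  rw [this]; exact h4

lemma gp_F (α : ℝ) (hα : 0 < α) (b : ℝ) (hb : 0 < b) (hb' : b < 1) :
    ∑' x : ℕ, gpf α x * (b * Real.exp (-b)) ^ x = Real.exp (α * b) := by
  have hA : AnalyticOnNhd ℝ (fun b : ℝ => ∑' x : ℕ, gpf α x * (b * Real.exp (-b)) ^ x)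
      (Set.Ioo 0 1) := by
    intro c hc
    refine AnalyticAt.fun_comp (g := fun z : ℝ => ∑' x : ℕ, gpf α x * z ^ x)
      (f := fun b : ℝ => b * Real.exp (-b)) (gp_analytic α hα _ ?_) (by fun_prop)
    have h := gp_z c hc.2
    have h0 := hc.1
    rw [mem_ball_zero_iff, Real.norm_of_nonneg (by positivity), Real.exp_neg 1,
      lt_inv_comm₀ (by positivity) (by positivity), ← one_div, lt_div_iff₀ (by positivity)]
    exact h
  have hB : AnalyticOnNhd ℝ (fun b : ℝ => Real.exp (α * b)) (Set.Ioo 0 1) := by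
    intro c _; fun_prop
  refine hA.eqOn_of_preconnected_of_eventuallyEq hB isPreconnected_Ioo (z₀ := 1/20)
    (by norm_num) ?_ ⟨hb, hb'⟩
  filter_upwards [Ioo_mem_nhds (show (0:ℝ) < 1/20 by norm_num) (show (1/20:ℝ) < 1/10 by norm_num)]
    with c hc
  exact gp_small_s2 α hα c hc.1 hc.2

lemma gp_deriv (α : ℝ) (hα : 0 < α) (k : ℕ) (z : ℝ) (hz : 0 < z) (hz' : Real.exp 1 * z < 1) :
    HasDerivAt (fun z : ℝ => ∑' x : ℕ, (x:ℝ) ^ k * gpf α x * z ^ x)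
      ((∑' x : ℕ, (x:ℝ) ^ (k+1) * gpf α x * z ^ x) / z) z := by
  obtain ⟨r, hzr, hr⟩ : ∃ r, z < r ∧ Real.exp 1 * r < 1 := by
    have : z < 1 / Real.exp 1 := by rw [lt_div_iff₀ (by positivity)]; linarith
    obtain ⟨r, h1, h2⟩ := exists_between this
    refine ⟨r, h1, ?_⟩
    rw [lt_div_iff₀ (by positivity)] at h2; linarith
  have hr0 : 0 < r := hz.trans hzr
  have hu := (gp_summable α hα (k+1) r hr0.le hr).mul_right r⁻¹
  have key := hasDerivAt_tsum_of_isPreconnected (𝕜 := ℝ) (t := Set.Ioo 0 r) (y := z) (y₀ := z)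
    (g := fun (x : ℕ) (z : ℝ) => (x:ℝ) ^ k * gpf α x * z ^ x)
    (g' := fun (x : ℕ) (z : ℝ) => (x:ℝ) ^ k * gpf α x * ((x:ℝ) * z ^ (x-1)))
    hu isOpen_Ioo isPreconnected_Ioo
    (fun n y _ => (hasDerivAt_pow n y).const_mul _) ?_ ⟨hz, hzr⟩
    (gp_summable α hα k z hz.le hz') ⟨hz, hzr⟩
  · convert! key using 1
    rw [← tsum_div_const]
    refine tsum_congr fun x => ?_
    rcases x with _ | x
    · simp
    · simp only [Nat.add_sub_cancel]
      field_simp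
      ring
  · intro x y hy
    have hy0 := hy.1
    have hy1 := hy.2
    have := gpf_nonneg α hα x
    rw [Real.norm_of_nonneg (by positivity)]
    calc _ ≤ (x:ℝ) ^ k * gpf α x * ((x:ℝ) * r ^ (x-1)) := by gcongr
      _ = _ := by
        rcases x with _ | x
        · simp
        · simp only [Nat.add_sub_cancel]
          field_simp
          ring

lemma gp_step (α : ℝ) (hα : 0 < α) (k : ℕ) (h h' : ℝ → ℝ)
    (H : ∀ b : ℝ, 0 < b → b < 1 → ∑' x : ℕ, (x:ℝ) ^ k * gpf α x * (b * Real.exp (-b)) ^ x = h b)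
    (H' : ∀ b : ℝ, 0 < b → b < 1 → HasDerivAt h (h' b) b) (b : ℝ) (hb : 0 < b) (hb' : b < 1) :
    ∑' x : ℕ, (x:ℝ) ^ (k+1) * gpf α x * (b * Real.exp (-b)) ^ x = b / (1 - b) * h' b := by
  have d1 := gp_deriv α hα k (b * Real.exp (-b)) (by positivity) (gp_z b hb')
  have d2 : HasDerivAt (fun b : ℝ => b * Real.exp (-b)) ((1 - b) * Real.exp (-b)) b := by
    convert! (hasDerivAt_id b).mul ((hasDerivAt_neg b).exp) using 1
    simp; ring
  have d3 := d1.comp b d2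
  have d4 := (H' b hb hb').congr_of_eventuallyEq (f₁ := (fun z : ℝ => ∑' x : ℕ, (x:ℝ) ^ k * gpf α x * z ^ x) ∘ (fun b : ℝ => b * Real.exp (-b))) (by
    filter_upwards [Ioo_mem_nhds hb hb'] with c hc
    exact H c hc.1 hc.2)
  have e := d3.unique d4
  have h1 : 1 - b ≠ 0 := by linarith
  have h2 := (Real.exp_pos (-b)).ne'
  rw [← e]
  field_simp

lemma gp_second (α : ℝ) (hα : 0 < α) (b : ℝ) (hb : 0 < b) (hb' : b < 1) :
    ∑' x : ℕ, (x:ℝ) ^ 2 * gpf α x * (b * Real.exp (-b)) ^ x =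
      Real.exp (α * b) * (α * b / (1 - b) ^ 3 + (α * b / (1 - b)) ^ 2) := by
  have dE (b : ℝ) : HasDerivAt (fun b => Real.exp (α * b)) (α * Real.exp (α * b)) b := by
    have := ((hasDerivAt_id b).const_mul α).exp
    simp only [id, mul_one] at this
    rw [mul_comm α (Real.exp _)]; exact this
  have s1 := gp_step α hα 0 (fun b => Real.exp (α * b)) (fun b => α * Real.exp (α * b))
    (fun b h0 h1 => by simpa using gp_F α hα b h0 h1) (fun b _ _ => dE b)
  have s2 := gp_step α hα 1 _ (fun b => 1 / (1 - b) ^ 2 * (α * Real.exp (α * b))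
      + b / (1 - b) * (α * (α * Real.exp (α * b)))) s1 (fun b _ h1 => by
    have hn : 1 - b ≠ 0 := by linarith
    have dq : HasDerivAt (fun b : ℝ => b / (1 - b)) (1 / (1 - b) ^ 2) b := by
      convert! (hasDerivAt_id b).div ((hasDerivAt_id b).const_sub 1) hn using 1
      simp
    exact dq.mul ((dE b).const_mul α)) b hb hb'
  rw [s2]
  have hn : 1 - b ≠ 0 := by linarith
  field_simp

lemma gp_poisson (a : ℝ) :
    HasSum (fun x : ℕ => (x:ℝ) ^ 2 * (a ^ x / x.factorial)) (Real.exp a * (a + a ^ 2)) := by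
  have h0 : HasSum (fun x : ℕ => a ^ x / (x.factorial : ℝ)) (Real.exp a) := by
    have := NormedSpace.expSeries_div_hasSum_exp a
    rwa [← Real.exp_eq_exp_ℝ] at this
  have h1 : HasSum (fun x : ℕ => (x:ℝ) * (a ^ x / x.factorial)) (a * Real.exp a) := by
    rw [← hasSum_nat_add_iff' 1]
    convert! h0.mul_left a using 1
    · ext x
      rw [Nat.factorial_succ]; push_cast; field_simp; ring
    · simp
  rw [← hasSum_nat_add_iff' 1]
  convert! (h1.add h0).mul_left a using 1
  · ext x
    rw [Nat.factorial_succ]; push_cast; field_simp; ring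
  · simp; ring


/-- The variance of the Generalized Poisson distribution:
for `λ₁ > 0` and `0 ≤ λ₂ < 1`,
`∑_{x=0}^∞ x² · λ₁ (λ₁ + x λ₂)^(x-1) e^{-(λ₁ + x λ₂)} / x! − (λ₁/(1-λ₂))²
  = λ₁ / (1 - λ₂)³`. -/
theorem genPoisson_variance (lam1 lam2 : ℝ) (h1 : 0 < lam1)
    (h2 : 0 ≤ lam2) (h2' : lam2 < 1) :
    (∑' x : ℕ, (x : ℝ) ^ 2 * (lam1 * (lam1 + x * lam2) ^ ((x : ℝ) - 1) *
        Real.exp (-(lam1 + x * lam2)) / (Nat.factorial x)))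
      - (lam1 / (1 - lam2)) ^ 2 = lam1 / (1 - lam2) ^ 3 := by
  have hn : 1 - lam2 ≠ 0 := by linarith
  have hsub (x : ℕ) : (lam1 + x * lam2) ^ ((x : ℝ) - 1) = (lam1 + x * lam2) ^ x / (lam1 + x * lam2) := by
    rw [Real.rpow_sub (by positivity), Real.rpow_natCast, Real.rpow_one]
  simp_rw [hsub]
  rcases h2.eq_or_lt with rfl | hpos
  · have := ((gp_poisson lam1).mul_left (Real.exp (-lam1))).tsum_eq
    rw [← mul_assoc, ← Real.exp_add] at this
    simp only [neg_add_cancel, Real.exp_zero, one_mul] at this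
    simp only [mul_zero, add_zero, sub_zero, div_one, one_pow]
    rw [sub_eq_iff_eq_add, ← this]
    refine tsum_congr fun x => ?_
    field_simp
  · obtain ⟨α, hα, rfl⟩ : ∃ α, 0 < α ∧ lam1 = α * lam2 :=
      ⟨lam1 / lam2, by positivity, by field_simp⟩
    have := gp_second α hα lam2 hpos h2'
    have e : ∀ x : ℕ, (x : ℝ) ^ 2 * (α * lam2 * ((α * lam2 + x * lam2) ^ x / (α * lam2 + x * lam2)) *
        Real.exp (-(α * lam2 + x * lam2)) / (Nat.factorial x)) =
        Real.exp (-(α * lam2)) * ((x:ℝ) ^ 2 * gpf α x * (lam2 * Real.exp (-lam2)) ^ x) := by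
      intro x
      have h3 : Real.exp (-(α * lam2 + x * lam2)) = Real.exp (-(α * lam2)) * Real.exp (-lam2) ^ x := by
        rw [← Real.exp_nat_mul, ← Real.exp_add]; congr 1; ring
      rw [h3, ← add_mul, mul_pow, mul_pow, gpf]
      have : α + (x:ℝ) ≠ 0 := by positivity
      field_simp
    simp_rw [e]
    rw [tsum_mul_left, this, ← mul_assoc, ← Real.exp_add]
    simp
end

section
/- Let h be a non-negative integer, let v > 0 be real, and let s be real with 0 < s < 2π. Then ∑_{k=0}^∞ e^{-s k} (v + k)^{h} = e^{s v} ( h! / s^{h+1} − ∑_{r=0}^∞ B_{h+r+1}(v) (−s)^r / (r! (h + r + 1)) ), where B_n denotes the n-th Bernoulli polynomial and both series converge. -/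
theorem bern_bound (n : ℕ) : |(bernoulli n : ℝ)| * (2 * Real.pi) ^ n / n.factorial ≤ 4 := by
  have hpi := Real.pi_pos
  have hpi2 := Real.pi_lt_d2
  rcases Nat.even_or_odd' n with ⟨m, rfl | rfl⟩
  · rcases eq_or_ne m 0 with rfl | hm
    · simp
    · have h1 := hasSum_zeta_nat hm
      have h2 := hasSum_zeta_two
      have h3 := hasSum_le (fun k : ℕ => (?_ : 1 / (k : ℝ) ^ (2 * m) ≤ 1 / (k : ℝ) ^ 2)) h1 h2
      · have h4 := h1.nonneg (fun k => by positivity)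
        rw [← abs_of_nonneg h4] at h3
        have h5 : (2 : ℝ) ^ (2 * m) = 2 * 2 ^ (2 * m - 1) := by
          rw [← pow_succ']; congr 1; omega
        rw [abs_div, abs_mul, abs_mul, abs_mul] at h3
        simp only [abs_pow, abs_neg, abs_one, one_pow, one_mul, Nat.abs_ofNat, Nat.abs_cast, abs_of_pos hpi] at h3
        rw [mul_pow, h5]
        calc _ = 2 * (2 ^ (2 * m - 1) * Real.pi ^ (2 * m) * |(bernoulli (2 * m) : ℝ)| / ((2 * m).factorial : ℝ)) := by ring
          _ ≤ 2 * (Real.pi ^ 2 / 6) := by gcongr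
          _ ≤ 4 := by nlinarith
      · rcases Nat.eq_zero_or_pos k with rfl | hk
        · simp [hm]
        · have : (1 : ℝ) ≤ k := by exact_mod_cast hk
          gcongr
          · omega
  · rcases eq_or_ne m 0 with rfl | hm
    · rw [show 2 * 0 + 1 = 1 from rfl, bernoulli_one]
      norm_num [abs_div]
      linarith
    · rw [bernoulli_eq_zero_of_odd ⟨m, rfl⟩ (by omega)]
      simp

theorem bernPoly_bound (v : ℝ) (n : ℕ) :
    |Polynomial.aeval v (Polynomial.bernoulli n)| ≤
      4 * Real.exp (2 * Real.pi * |v|) * (n.factorial / (2 * Real.pi) ^ n) := by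
  have hpi := Real.pi_pos
  have key : ∀ i ∈ Finset.range (n + 1),
      |(Polynomial.aeval v) (Polynomial.monomial i (bernoulli (n - i) * (n.choose i : ℚ)))| ≤
      4 * (n.factorial / (2 * Real.pi) ^ n) * ((2 * Real.pi * |v|) ^ i / i.factorial) := by
    intro i hi
    have hi' : i ≤ n := Nat.lt_succ_iff.mp (Finset.mem_range.mp hi)
    have hb := bern_bound (n - i)
    rw [Polynomial.aeval_monomial]
    have e : ((n.choose i : ℕ) : ℝ) = n.factorial / (i.factorial * (n - i).factorial) :=
      Nat.cast_choose ℝ hi'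
    have e2 : (2 * Real.pi) ^ n = (2 * Real.pi) ^ (n - i) * (2 * Real.pi) ^ i := by
      rw [← pow_add]; congr 1; omega
    simp only [eq_ratCast, Rat.cast_mul, Rat.cast_natCast, abs_mul, abs_pow, Nat.abs_cast]
    rw [e, e2, mul_pow _ |v|]
    calc _ = (|(bernoulli (n - i) : ℝ)| * (2 * Real.pi) ^ (n - i) / (n - i).factorial) *
          (n.factorial / (i.factorial * (2 * Real.pi) ^ (n - i)) * |v| ^ i) := by
            field_simp
      _ ≤ 4 * (n.factorial / (i.factorial * (2 * Real.pi) ^ (n - i)) * |v| ^ i) := by gcongr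
      _ = _ := by field_simp
  rw [Polynomial.bernoulli_def, map_sum]
  calc _ ≤ _ := Finset.abs_sum_le_sum_abs _ _
    _ ≤ _ := Finset.sum_le_sum key
    _ = 4 * (n.factorial / (2 * Real.pi) ^ n) *
        ∑ i ∈ Finset.range (n + 1), ((2 * Real.pi * |v|) ^ i / i.factorial) := by
          rw [Finset.mul_sum]
    _ ≤ 4 * (n.factorial / (2 * Real.pi) ^ n) * Real.exp (2 * Real.pi * |v|) := by
          gcongr
          exact Real.sum_le_exp_of_nonneg (by positivity) _
    _ = _ := by ring

/-- coefficients -/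
noncomputable def lbC (v : ℝ) (n : ℕ) : ℝ :=
  Polynomial.aeval v (Polynomial.bernoulli (n + 1)) / (n + 1)

theorem lbC_bound (v : ℝ) (n : ℕ) :
    |lbC v n| ≤ 4 * Real.exp (2 * Real.pi * |v|) * (n.factorial / (2 * Real.pi) ^ (n+1)) := by
  have h := bernPoly_bound v (n + 1)
  have hn : (0 : ℝ) < n + 1 := by positivity
  rw [lbC, abs_div, abs_of_pos hn, div_le_iff₀ hn]
  refine h.trans (le_of_eq ?_)
  rw [Nat.factorial_succ]; push_cast; ring

theorem lbC_summable (v : ℝ) (h : ℕ) (ρ : ℝ) (h0 : 0 ≤ ρ) (h1 : ρ < 2 * Real.pi) :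
    Summable (fun r : ℕ => |lbC v (h + r)| * ρ ^ r / r.factorial) := by
  have hpi := Real.pi_pos
  have hr : ‖ρ / (2 * Real.pi)‖ < 1 := by
    rw [Real.norm_of_nonneg (by positivity), div_lt_one (by positivity)]; exact h1
  refine Summable.of_nonneg_of_le (fun r => by positivity) (fun r => ?_)
    ((summable_descFactorial_mul_geometric_of_norm_lt_one h hr).mul_left
      (4 * Real.exp (2 * Real.pi * |v|) / (2 * Real.pi) ^ (h + 1)))
  have e : (((r + h).descFactorial h : ℕ) : ℝ) = (h + r).factorial / r.factorial := by
    have := Nat.factorial_mul_descFactorial (n := r + h) (k := h) (by omega)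
    rw [Nat.add_sub_cancel] at this
    rw [eq_div_iff (by positivity), add_comm h r, ← this]; push_cast; ring
  rw [e]
  calc _ ≤ 4 * Real.exp (2 * Real.pi * |v|) * ((h + r).factorial / (2 * Real.pi) ^ (h + r+1)) * ρ ^ r / r.factorial := by
        gcongr; exact lbC_bound v _
    _ = _ := by
      rw [div_pow, show h + r + 1 = h + 1 + r by ring, pow_add _ (h+1) r]; field_simp

theorem lb_lhs_summable (v : ℝ) (hv : 0 < v) (h : ℕ) (s : ℝ) (hs : 0 < s) :
    Summable (fun k : ℕ => Real.exp (-s * k) * (v + k) ^ h) := by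
  have h1 := (summable_nat_add_iff 1).mpr (Real.summable_pow_mul_exp_neg_nat_mul h hs)
  refine Summable.of_nonneg_of_le (fun k => by positivity) (fun k => ?_)
    (h1.mul_left ((v + 1) ^ h * Real.exp s))
  have e : Real.exp (-s * k) = Real.exp s * Real.exp (-s * ((k + 1 : ℕ) : ℝ)) := by
    rw [← Real.exp_add]; congr 1; push_cast; ring
  have e2 : (v + k) ^ h ≤ (v + 1) ^ h * ((k + 1 : ℕ) : ℝ) ^ h := by
    rw [← mul_pow]; gcongr; push_cast
    have : (0 : ℝ) ≤ k := by positivity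
    nlinarith
  rw [e]
  calc _ ≤ Real.exp s * Real.exp (-s * ((k + 1 : ℕ) : ℝ)) * ((v + 1) ^ h * ((k + 1 : ℕ) : ℝ) ^ h) := by gcongr
    _ = _ := by ring

theorem lb_lhs_summable' (v : ℝ) (hv : 0 < v) (h : ℕ) (s : ℝ) (hs : 0 < s) :
    Summable (fun k : ℕ => Real.exp (-s * (v + k)) * (v + k) ^ h) := by
  refine ((lb_lhs_summable v hv h s hs).mul_left (Real.exp (-s * v))).congr (fun k => ?_)
  rw [← mul_assoc, ← Real.exp_add]; congr 2; ring

theorem lb_rhs_summable (v : ℝ) (h : ℕ) (s : ℝ) (hs : |s| < 2 * Real.pi) :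
    Summable (fun r : ℕ => lbC v (h + r) * (-s) ^ r / r.factorial) := by
  refine Summable.of_norm ((lbC_summable v h |s| (abs_nonneg _) hs).congr fun r => ?_)
  simp

theorem lb_lhs_deriv (v : ℝ) (hv : 0 < v) (h : ℕ) (s : ℝ) (hs : 0 < s) :
    HasDerivAt (fun s => ∑' k : ℕ, Real.exp (-s * (v + k)) * (v + k) ^ h)
      (∑' k : ℕ, -(Real.exp (-s * (v + k)) * (v + k) ^ (h + 1))) s := by
  have hs2 : 0 < s / 2 := by positivity
  refine hasDerivAt_tsum_of_isPreconnected (t := Set.Ioi (s / 2)) (y₀ := s)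
    (u := fun k : ℕ => Real.exp (-(s / 2) * (v + k)) * (v + k) ^ (h + 1))
    (g := fun k s => Real.exp (-s * (v + k)) * (v + k) ^ h)
    (g' := fun k s => -(Real.exp (-s * (v + k)) * (v + k) ^ (h + 1)))
    (lb_lhs_summable' v hv (h + 1) _ hs2) isOpen_Ioi isPreconnected_Ioi ?_ ?_
    (by simp; linarith) (lb_lhs_summable' v hv h s hs) (by simp; linarith)
  · intro k y _
    have := (((hasDerivAt_neg' y).mul_const (v + (k : ℝ))).exp).mul_const ((v + (k : ℝ)) ^ h)
    exact this.congr_deriv (by ring)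
  · intro k y hy
    have hy : s / 2 < y := hy
    rw [norm_neg, Real.norm_of_nonneg (by positivity)]
    gcongr

theorem lb_rhs_deriv (v : ℝ) (h : ℕ) (s : ℝ) (hs : 0 < s) (hs2 : s < 2 * Real.pi) :
    HasDerivAt (fun s => ∑' r : ℕ, lbC v (h + r) * (-s) ^ r / r.factorial)
      (-∑' r : ℕ, lbC v (h + 1 + r) * (-s) ^ r / r.factorial) s := by
  obtain ⟨ρ, h1, h2⟩ := exists_between hs2
  have hρ : 0 < ρ := hs.trans h1
  have key : HasDerivAt (fun s => ∑' r : ℕ, lbC v (h + r) * (-s) ^ r / r.factorial)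
      (∑' r : ℕ, -(lbC v (h + r) * (r * (-s) ^ (r - 1)) / r.factorial)) s := by
    refine hasDerivAt_tsum_of_isPreconnected (t := Set.Ioo (-ρ) ρ) (y₀ := s)
      (u := fun r : ℕ => |lbC v (h + r)| * (r * ρ ^ (r - 1)) / r.factorial)
      (g := fun r s => lbC v (h + r) * (-s) ^ r / r.factorial)
      (g' := fun r s => -(lbC v (h + r) * (r * (-s) ^ (r - 1)) / r.factorial))
      ?_ isOpen_Ioo isPreconnected_Ioo ?_ ?_
      ⟨by linarith, h1⟩ (lb_rhs_summable v h s (by rwa [abs_of_pos hs])) ⟨by linarith, h1⟩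
    · rw [← summable_nat_add_iff 1]
      refine (lbC_summable v (h + 1) ρ hρ.le h2).congr fun r => ?_
      rw [show h + (r + 1) = h + 1 + r by ring, Nat.factorial_succ, Nat.add_sub_cancel]
      push_cast; field_simp
    · intro r y _
      have := ((((hasDerivAt_neg' y).fun_pow r).const_mul (lbC v (h + r))).div_const (r.factorial : ℝ))
      exact this.congr_deriv (by ring)
    · intro r y hy
      have hy : |y| ≤ ρ := abs_le.mpr ⟨hy.1.le, hy.2.le⟩
      rw [norm_neg, Real.norm_eq_abs, abs_div, abs_mul, abs_mul, abs_pow, abs_neg, Nat.abs_cast, Nat.abs_cast]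
      gcongr
  refine key.congr_deriv ?_
  rw [tsum_neg]
  congr 1
  have e : ∀ r : ℕ, lbC v (h + (r + 1)) * (((r + 1 : ℕ) : ℝ) * (-s) ^ (r + 1 - 1)) / (r + 1).factorial = lbC v (h + 1 + r) * (-s) ^ r / r.factorial := by
    intro r
    rw [show h + (r + 1) = h + 1 + r by ring, Nat.factorial_succ, Nat.add_sub_cancel]
    push_cast; field_simp
  rw [Summable.tsum_eq_zero_add]
  · simp only [e]; simp
  · rw [← summable_nat_add_iff 1]
    simp only [e]
    exact lb_rhs_summable v (h + 1) s (by rwa [abs_of_pos hs])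

theorem lb_gen (v t : ℝ) (ht : |t| < 2 * Real.pi) :
    Summable (fun n : ℕ => Polynomial.aeval v (Polynomial.bernoulli n) / n.factorial * t ^ n) ∧
    (∑' n : ℕ, Polynomial.aeval v (Polynomial.bernoulli n) / n.factorial * t ^ n) *
      (Real.exp t - 1) = t * Real.exp (v * t) := by
  have hS : Summable (fun n : ℕ =>
      ‖Polynomial.aeval v (Polynomial.bernoulli n) / n.factorial * t ^ n‖) := by
    have := (lbC_summable v 0 |t| (abs_nonneg _) ht).mul_right |t|
    rw [← summable_nat_add_iff 1]
    refine Summable.of_nonneg_of_le (fun _ => norm_nonneg _) (fun r => le_of_eq ?_) this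
    have : (0 : ℝ) < r + 1 := by positivity
    rw [lbC, zero_add, Nat.factorial_succ]
    simp only [norm_mul, norm_div, norm_pow, Real.norm_eq_abs, abs_div, Nat.abs_cast, abs_of_pos this]
    push_cast; field_simp; ring
  refine ⟨hS.of_norm, ?_⟩
  let g : ℕ → ℝ := fun n => PowerSeries.coeff n (PowerSeries.exp ℝ - 1) * t ^ n
  have hgn : ∀ n, g (n + 1) = t ^ (n + 1) / (n + 1).factorial := by
    intro n; simp [g, PowerSeries.coeff_exp, PowerSeries.coeff_one]; ring
  have hg0 : g 0 = 0 := by simp [g]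
  have hexp : ∀ x : ℝ, HasSum (fun n : ℕ => x ^ n / n.factorial) (Real.exp x) := by
    intro x
    rw [Real.exp_eq_exp_ℝ]; exact NormedSpace.expSeries_div_hasSum_exp x
  have hgs : HasSum g (Real.exp t - 1) := by
    rw [← hasSum_nat_add_iff' 1]
    have := (hasSum_nat_add_iff' 1).mpr (hexp t)
    simp only [hgn]
    simpa [hg0] using this
  have hgS : Summable (fun n => ‖g n‖) := hgs.summable.norm
  rw [← hgs.tsum_eq, tsum_mul_tsum_eq_tsum_sum_antidiagonal_of_summable_norm hS hgS]
  have hc : ∀ n, ∑ kl ∈ Finset.HasAntidiagonal.antidiagonal n,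
      Polynomial.aeval v (Polynomial.bernoulli kl.1) / kl.1.factorial * t ^ kl.1 * g kl.2 =
      PowerSeries.coeff n (PowerSeries.X * PowerSeries.rescale v (PowerSeries.exp ℝ)) * t ^ n := by
    intro n
    rw [← Polynomial.bernoulli_generating_function, PowerSeries.coeff_mul, Finset.sum_mul]
    refine Finset.sum_congr rfl fun kl hkl => ?_
    rw [← Finset.HasAntidiagonal.mem_antidiagonal.mp hkl, pow_add, PowerSeries.coeff_mk, map_smul, Algebra.smul_def]
    simp only [g, eq_ratCast]
    push_cast
    ring
  simp only [hc]
  have hR : HasSum (fun n => PowerSeries.coeff n (PowerSeries.X * PowerSeries.rescale v (PowerSeries.exp ℝ)) * t ^ n) (t * Real.exp (v * t)) := by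
    rw [← hasSum_nat_add_iff' 1]
    have := (hexp (v * t)).mul_left t
    simp only [PowerSeries.coeff_succ_X_mul, PowerSeries.coeff_rescale, PowerSeries.coeff_exp]
    simp only [Finset.range_one, Finset.sum_singleton, PowerSeries.coeff_zero_X_mul, zero_mul, sub_zero]
    refine (congrArg (fun f => HasSum f (t * Real.exp (v * t))) (funext fun n => ?_)).mpr this
    simp [mul_pow]; ring
  exact hR.tsum_eq

theorem lb_base (v s : ℝ) (hs : 0 < s) (hs2 : s < 2 * Real.pi) :
    ∑' k : ℕ, Real.exp (-s * (v + k)) =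
      1 / s - ∑' r : ℕ, lbC v r * (-s) ^ r / r.factorial := by
  obtain ⟨h1, h2⟩ := lb_gen v (-s) (by rwa [abs_neg, abs_of_pos hs])
  rw [h1.tsum_eq_zero_add] at h2
  have e : ∀ n : ℕ, Polynomial.aeval v (Polynomial.bernoulli (n + 1)) / (n + 1).factorial * (-s) ^ (n + 1) = (-s) * (lbC v n * (-s) ^ n / n.factorial) := by
    intro n
    rw [lbC, Nat.factorial_succ]; push_cast; field_simp; ring
  simp only [e, tsum_mul_left] at h2
  have hq : Real.exp (-s) < 1 := by rw [Real.exp_lt_one_iff]; linarith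
  have e3 : ∀ k : ℕ, Real.exp (-s * (v + k)) = Real.exp (v * -s) * Real.exp (-s) ^ k := by
    intro k
    rw [← Real.exp_nat_mul, ← Real.exp_add]; congr 1; ring
  simp only [e3, tsum_mul_left]
  rw [tsum_geometric_of_lt_one (Real.exp_pos _).le hq]
  have hq' : 1 - Real.exp (-s) ≠ 0 := by linarith
  simp only [Polynomial.bernoulli_zero, map_one, Nat.factorial_zero, Nat.cast_one, div_one, pow_zero, mul_one] at h2
  generalize Real.exp (v * -s) = E at h2 ⊢
  field_simp
  linarith

theorem lb_main (v : ℝ) (hv : 0 < v) (h : ℕ) : ∀ s : ℝ, 0 < s → s < 2 * Real.pi →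
    ∑' k : ℕ, Real.exp (-s * (v + k)) * (v + k) ^ h =
      h.factorial / s ^ (h + 1) - ∑' r : ℕ, lbC v (h + r) * (-s) ^ r / r.factorial := by
  induction h with
  | zero => intro s hs hs2; simpa using lb_base v s hs hs2
  | succ h ih =>
    intro s hs hs2
    have d1 := lb_lhs_deriv v hv h s hs
    have d2 := (((hasDerivAt_pow (h + 1) s).fun_inv (by positivity)).const_mul
      (h.factorial : ℝ)).fun_sub (lb_rhs_deriv v h s hs hs2)
    have ev : (fun s => ∑' k : ℕ, Real.exp (-s * (v + k)) * (v + k) ^ h) =ᶠ[nhds s]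
        (fun s => (h.factorial : ℝ) * (s ^ (h + 1))⁻¹ -
          ∑' r : ℕ, lbC v (h + r) * (-s) ^ r / r.factorial) := by
      filter_upwards [Ioo_mem_nhds hs hs2] with y hy
      rw [ih y hy.1 hy.2, div_eq_mul_inv]
    have := d1.unique (d2.congr_of_eventuallyEq ev)
    rw [tsum_neg] at this
    rw [← neg_inj, this, Nat.factorial_succ, Nat.add_sub_cancel]
    push_cast
    field_simp
    ring

theorem lerch_bernoulli_expansion (h : ℕ) (v s : ℝ) (hv : 0 < v)
    (hs : 0 < s) (hs2 : s < 2 * Real.pi) :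
    Summable (fun k : ℕ => Real.exp (-s * k) * (v + k) ^ h)
    ∧ Summable (fun r : ℕ =>
        Polynomial.aeval v (Polynomial.bernoulli (h + r + 1)) * (-s) ^ r /
          ((Nat.factorial r : ℝ) * (h + r + 1)))
    ∧ (∑' k : ℕ, Real.exp (-s * k) * (v + k) ^ h)
      = Real.exp (s * v) *
          ((Nat.factorial h : ℝ) / s ^ (h + 1)
            - ∑' r : ℕ, Polynomial.aeval v (Polynomial.bernoulli (h + r + 1)) *
                (-s) ^ r / ((Nat.factorial r : ℝ) * (h + r + 1))) := by
  have e : ∀ r : ℕ, Polynomial.aeval v (Polynomial.bernoulli (h + r + 1)) * (-s) ^ r /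
          ((Nat.factorial r : ℝ) * (h + r + 1)) = lbC v (h + r) * (-s) ^ r / r.factorial := by
    intro r
    rw [lbC]; push_cast; field_simp
  simp only [e]
  refine ⟨lb_lhs_summable v hv h s hs, lb_rhs_summable v h s (by rwa [abs_of_pos hs]), ?_⟩
  rw [← lb_main v hv h s hs hs2, ← tsum_mul_left]
  refine tsum_congr fun k => ?_
  rw [← mul_assoc, ← Real.exp_add]; congr 2; ring
end

section
/- Fix a non-negative integer x and a real v > 0. Then as s → 0⁺, ∑_{k=0}^∞ e^{-s(v + k)} (v + k)^{x} = x! / s^{x+1} − B_{x+1}(v)/(x + 1) + O(s); that is, there exist constants C > 0 and s₀ > 0 such that for all 0 < s < s₀, | ∑_{k=0}^∞ e^{-s(v+k)} (v + k)^{x} − x!/s^{x+1} + B_{x+1}(v)/(x+1) | ≤ C s. -/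
open Filter Topology in
lemma aux_dslope (f : ℝ → ℝ) (hf : AnalyticOnNhd ℝ f Set.univ) :
    AnalyticOnNhd ℝ (dslope f 0) Set.univ := by
  intro u _
  by_cases hu : u = 0
  · subst hu
    obtain ⟨p, hp⟩ := hf 0 trivial
    exact ⟨_, hp.has_fpower_series_dslope_fslope⟩
  · have h : AnalyticAt ℝ (fun y => (f y - f 0) / y) u :=
      ((hf u trivial).sub analyticAt_const).div analyticAt_id hu
    refine h.congr ?_
    filter_upwards [isOpen_ne.mem_nhds hu] with y hy
    rw [dslope_of_ne _ hy, slope_def_field, sub_zero]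

lemma aux_exp {u : ℝ} (hu : u < 0) : Real.exp u < 1 := by
  rw [← Real.exp_zero]; exact Real.exp_lt_exp.2 hu

lemma aux_hasDeriv (f : ℝ → ℝ) (hf : ContDiff ℝ ⊤ f) (n : ℕ) (u : ℝ) :
    HasDerivAt (iteratedDeriv n f) (iteratedDeriv (n + 1) f u) u := by
  rw [iteratedDeriv_succ]
  exact ((hf.differentiable_iteratedDeriv n (by exact_mod_cast WithTop.coe_lt_top _)) u).hasDerivAt

lemma aux_mul_id (f : ℝ → ℝ) (hf : ContDiff ℝ ⊤ f) (n : ℕ) :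
    iteratedDeriv (n + 1) (fun u => u * f u) =
      fun u => u * iteratedDeriv (n + 1) f u + (n + 1) * iteratedDeriv n f u := by
  induction n with
  | zero =>
    funext u
    have := (hasDerivAt_id u).mul (aux_hasDeriv f hf 0 u)
    rw [iteratedDeriv_one]
    simp only [iteratedDeriv_zero] at this
    refine this.deriv.trans ?_
    simp; ring
  | succ n ih =>
    funext u
    rw [iteratedDeriv_succ, ih]
    have := ((hasDerivAt_id u).mul (aux_hasDeriv f hf (n + 1) u)).add
      ((aux_hasDeriv f hf n u).const_mul ((n : ℝ) + 1))
    refine this.deriv.trans ?_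
    simp; ring

lemma aux_bern (v : ℝ) (g : ℕ → ℝ)
    (hg : ∀ m : ℕ, ∑ i ∈ Finset.range (m + 1), ((m + 1).choose i : ℝ) * g i = (m + 1) * v ^ m) (n : ℕ) :
    g n = Polynomial.aeval v (Polynomial.bernoulli n) := by
  induction n using Nat.strong_induction_on with
  | _ n ih =>
    have h1 := hg n
    have h2 := congrArg (Polynomial.aeval v) (Polynomial.sum_bernoulli n)
    rw [map_sum] at h2
    simp only [map_smul, Polynomial.aeval_monomial] at h2
    rw [Finset.sum_range_succ] at h1 h2
    rw [Finset.sum_congr rfl (fun i hi => by rw [ih i (Finset.mem_range.1 hi)])] at h1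
    simp only [Rat.smul_def] at h2
    simp at h1 h2
    have h3 : ((n : ℝ) + 1) ≠ 0 := by positivity
    apply mul_left_cancel₀ h3
    linarith

lemma aux_exists (v : ℝ) : ∃ H : ℝ → ℝ, ContDiff ℝ ⊤ H ∧
    (∀ n : ℕ, iteratedDeriv n H 0 =
      Polynomial.aeval v (Polynomial.bernoulli (n + 1)) / ((n : ℝ) + 1)) ∧
    ∀ u < 0, Real.exp (v * u) / (1 - Real.exp u) = -u⁻¹ - H u := by
  set D := dslope Real.exp 0 with hD
  have hDa : AnalyticOnNhd ℝ D Set.univ := aux_dslope _ (fun x _ => (analyticAt_id (𝕜 := ℝ) (z := x)).rexp)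
  have hDu : ∀ u, u * D u = Real.exp u - 1 := by
    intro u
    have := sub_smul_dslope Real.exp 0 u
    simpa using this
  have hD0 : D 0 = 1 := by simp [hD]
  have hDne : ∀ u, D u ≠ 0 := by
    intro u h
    have := hDu u
    rw [h, mul_zero] at this
    have h0 : u = 0 := by rw [← Real.exp_eq_one_iff]; linarith
    rw [h0, hD0] at h
    norm_num at h
  set G : ℝ → ℝ := fun u => Real.exp (v * u) / D u with hG
  have hEa : ContDiff ℝ ⊤ (fun u => Real.exp (v * u)) := by fun_prop
  have hGa : AnalyticOnNhd ℝ G Set.univ := by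
    intro u _
    refine AnalyticAt.div ?_ (hDa u trivial) (hDne u)
    exact (analyticAt_const.mul analyticAt_id).rexp
  have hG0 : G 0 = 1 := by simp [hG, hD0]
  have hGc : ContDiff ℝ ⊤ G := hGa.contDiff
  have hGe : ∀ u, G u * Real.exp u = G u + u * Real.exp (v * u) := by
    intro u
    have h1 : Real.exp u = u * D u + 1 := by rw [hDu]; ring
    rw [h1]
    simp only [hG]
    field_simp [hDne u]
    ring
  have hHc : ContDiff ℝ ⊤ (dslope G 0) := (aux_dslope G hGa).contDiff
  have hHu : ∀ u, G u = 1 + u * dslope G 0 u := by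
    intro u
    have := sub_smul_dslope G 0 u
    simp only [sub_zero, smul_eq_mul, hG0] at this
    rw [this]; ring
  refine ⟨dslope G 0, hHc, ?_, ?_⟩
  · intro n
    have hb : ∀ k, iteratedDeriv k G 0 = Polynomial.aeval v (Polynomial.bernoulli k) := by
      apply aux_bern v (fun k => iteratedDeriv k G 0)
      intro m
      have h1 : iteratedDeriv (m + 1) (fun u => G u * Real.exp u) 0 =
          iteratedDeriv (m + 1) (G + fun u => u * Real.exp (v * u)) 0 := by
        congr 1; funext u; exact hGe u
      rw [iteratedDeriv_add (hGc.contDiffAt.of_le le_top) (g := fun u => u * Real.exp (v * u)) ((contDiff_id.mul hEa).contDiffAt.of_le le_top),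
        iteratedDeriv_fun_mul (hGc.contDiffAt.of_le le_top) (Real.contDiff_exp.contDiffAt),
        aux_mul_id _ hEa, Finset.sum_range_succ] at h1
      have he : ∀ k, iteratedDeriv k Real.exp 0 = 1 := by
        intro k; simp [iteratedDeriv_eq_iterate]
      have he' : ∀ k, iteratedDeriv k (fun u => Real.exp (v * u)) 0 = v ^ k := by
        intro k; simp [iteratedDeriv_exp_const_mul]
      simp only [he, he', mul_one, zero_mul, zero_add, Nat.choose_self, Nat.cast_one, one_mul] at h1
      linarith
    have h2 : iteratedDeriv (n + 1) G 0 = (n + 1) * iteratedDeriv n (dslope G 0) 0 := by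
      have : G = (fun _ => (1 : ℝ)) + fun u => u * dslope G 0 u := by funext u; exact hHu u
      conv_lhs => rw [this]
      rw [iteratedDeriv_add contDiffAt_const (g := fun u => u * dslope G 0 u) ((contDiff_id.mul hHc).contDiffAt.of_le le_top),
        aux_mul_id _ hHc]
      simp [iteratedDeriv_const]
    rw [← hb, h2]
    have h3 : ((n : ℝ) + 1) ≠ 0 := by positivity
    field_simp
  · intro u hu
    have h1 := hHu u
    have h2 : 1 - Real.exp u ≠ 0 := by
      have := aux_exp hu
      linarith
    have h4 : dslope G 0 u = (G u - 1) / u := by rw [h1]; field_simp [hu.ne]; ring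
    have h5 : G u = u * Real.exp (v * u) / (Real.exp u - 1) := by
      simp only [hG]; rw [← hDu]; field_simp [hu.ne, hDne u]
    rw [h4, h5, ← neg_sub (Real.exp u) 1]
    have h6 : Real.exp u - 1 ≠ 0 := fun h => h2 (by linarith)
    field_simp [hu.ne]
    ring

lemma aux_summable (n : ℕ) (v u : ℝ) (hu : u < 0) :
    Summable (fun k : ℕ => Real.exp (u * (v + k)) * (v + k) ^ n) := by
  have h : ∀ k : ℕ, Real.exp (u * (v + k)) * (v + k) ^ n =
      ∑ m ∈ Finset.range (n + 1), (Real.exp (u * v) * v ^ m * (n.choose m)) *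
        ((k : ℝ) ^ (n - m) * Real.exp (-(-u) * k)) := by
    intro k
    rw [add_pow, Finset.mul_sum, mul_add, Real.exp_add]
    refine Finset.sum_congr rfl fun m _ => ?_
    rw [neg_neg]; ring
  simp_rw [h]
  exact summable_sum fun m _ =>
    (Real.summable_pow_mul_exp_neg_nat_mul (n - m) (neg_pos.2 hu)).mul_left _

lemma aux_deriv (n : ℕ) (v u : ℝ) (hv : 0 < v) (hu : u < 0) :
    HasDerivAt (fun u => ∑' k : ℕ, Real.exp (u * (v + k)) * (v + k) ^ n)
      (∑' k : ℕ, Real.exp (u * (v + k)) * (v + k) ^ (n + 1)) u := by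
  have h2 : u / 2 < 0 := by linarith
  have hm : u ∈ Set.Iio (u / 2) := by simp only [Set.mem_Iio]; linarith
  refine hasDerivAt_tsum_of_isPreconnected (aux_summable (n + 1) v (u / 2) h2) isOpen_Iio
    isPreconnected_Iio (g' := fun (k : ℕ) u => Real.exp (u * (v + k)) * (v + k) ^ (n + 1))
    ?_ ?_ hm (aux_summable n v u hu) hm
  · intro k y _
    have := (((hasDerivAt_id y).mul_const (v + (k : ℝ))).exp).mul_const ((v + (k : ℝ)) ^ n)
    refine this.congr_deriv ?_
    simp only [id]
    ring
  · intro k y hy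
    have hk : 0 < v + (k : ℝ) := by positivity
    rw [Real.norm_of_nonneg (by positivity)]
    gcongr
    exact le_of_lt hy

lemma aux_main (v : ℝ) (hv : 0 < v) (H : ℝ → ℝ) (hH : ContDiff ℝ ⊤ H)
    (h0 : ∀ u < 0, Real.exp (v * u) / (1 - Real.exp u) = -u⁻¹ - H u) (n : ℕ) :
    ∀ u < 0, ∑' k : ℕ, Real.exp (u * (v + k)) * (v + k) ^ n =
      (-1) ^ (n + 1) * (n.factorial : ℝ) * (u⁻¹) ^ (n + 1) - iteratedDeriv n H u := by
  induction n with
  | zero =>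
    intro u hu
    have h1 : ∀ k : ℕ, Real.exp (u * (v + k)) * (v + k) ^ 0 =
        Real.exp (v * u) * Real.exp u ^ k := by
      intro k
      rw [pow_zero, mul_one, ← Real.exp_nat_mul, ← Real.exp_add]
      congr 1; ring
    simp_rw [h1]
    rw [tsum_mul_left, tsum_geometric_of_lt_one (Real.exp_pos u).le (aux_exp hu),
      ← div_eq_mul_inv, h0 u hu]
    simp
  | succ n ih =>
    intro u hu
    have h1 := aux_deriv n v u hv hu
    have h2 := (((hasDerivAt_inv hu.ne).pow (n + 1)).const_mul
      ((-1) ^ (n + 1) * (n.factorial : ℝ))).sub (aux_hasDeriv H hH n u)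
    have h3 := h2.congr_of_eventuallyEq (f₁ := fun u => ∑' k : ℕ, Real.exp (u * (v + k)) * (v + k) ^ n)
      (by filter_upwards [isOpen_Iio.mem_nhds hu] with y hy using ih y hy)
    rw [h1.unique h3, Nat.factorial_succ]
    push_cast
    rw [← inv_pow]
    ring

theorem lerch_gamma_bernoulli_approx (x : ℕ) (v : ℝ) (hv : 0 < v) :
    ∃ C > (0 : ℝ), ∃ s₀ > (0 : ℝ), ∀ s : ℝ, 0 < s → s < s₀ →
      |(∑' k : ℕ, Real.exp (-s * (v + k)) * (v + k) ^ x)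
          - (Nat.factorial x : ℝ) / s ^ (x + 1)
          + Polynomial.aeval v (Polynomial.bernoulli (x + 1)) / ((x : ℝ) + 1)|
        ≤ C * s := by
  obtain ⟨H, hH, hb, h0⟩ := aux_exists v
  have hO := (aux_hasDeriv H hH x 0).isBigO_sub
  obtain ⟨C, hC, hO⟩ := hO.exists_pos
  rw [Asymptotics.isBigOWith_iff, Metric.eventually_nhds_iff] at hO
  obtain ⟨e, he, hO⟩ := hO
  refine ⟨C, hC, e, he, fun s hs hse => ?_⟩
  have h1 := @hO (-s) (by simpa [abs_of_pos hs] using hse)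
  rw [aux_main v hv H hH h0 x (-s) (by linarith), ← hb x]
  have h2 : (-1) ^ (x + 1) * (x.factorial : ℝ) * ((-s)⁻¹) ^ (x + 1) = x.factorial / s ^ (x + 1) := by
    rw [inv_neg, neg_pow s⁻¹, inv_pow, mul_right_comm, ← mul_assoc, ← mul_pow]
    simp; ring
  rw [h2]
  simp only [Real.norm_eq_abs, sub_zero, abs_neg, abs_of_pos hs] at h1
  rw [abs_sub_comm] at h1
  convert h1 using 2
  ring
end
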